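/- For every leader's decision x = (x₁, x₂) in the box [x̲₁, x̄₁] × [x̲₂, x̄₂], every ε > 0, and every y ∈ Ω_ε(x), one has f(x, y) = 1/2 − y_n (1 + x₁ + x₂ − y_{n+1} − y_{n+2}) ≤ 1/2; in particular, no ε-feasible follower's decision yields an objective value larger than 1/2. -/

import Mathlib

/-- The set `Ω_ε(x)` of ε-feasible points: all linear constraints of `Ω(x)`
hold exactly and each quadratic constraint may be violated by at most `ε`. -/
def OmegaEps (n : ℕ) (x1 x2 ε : ℝ) : Set (Fin (n + 2) → ℝ) :=
  {y | y ⟨0, by omega⟩ + y ⟨n - 1, by omega⟩ = 1 / 2 ∧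
    (∀ i : ℕ, ∀ _h1 : 1 ≤ i, ∀ _h2 : i ≤ n - 1,
      (y ⟨i - 1, by omega⟩) ^ 2 ≤ y ⟨i, by omega⟩ + ε) ∧
    (∀ i : ℕ, ∀ _h1 : 1 ≤ i, ∀ _h2 : i ≤ n, 0 ≤ y ⟨i - 1, by omega⟩) ∧
    0 ≤ y ⟨n, by omega⟩ ∧ y ⟨n, by omega⟩ ≤ x1 ∧
    -x2 ≤ y ⟨n + 1, by omega⟩ ∧ y ⟨n + 1, by omega⟩ ≤ x2}

/-- The follower's objective `f(x, y) = y₁ − yₙ (x₁ + x₂ − y_{n+1} − y_{n+2})`. -/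
noncomputable def follower (n : ℕ) (x1 x2 : ℝ) (y : Fin (n + 2) → ℝ) : ℝ :=
  y ⟨0, by omega⟩ -
    y ⟨n - 1, by omega⟩ * (x1 + x2 - y ⟨n, by omega⟩ - y ⟨n + 1, by omega⟩)

/-- For every leader's decision `x` in the box, every `ε > 0`, and every
`y ∈ Ω_ε(x)`, one has
`f(x, y) = 1/2 − yₙ (1 + x₁ + x₂ − y_{n+1} − y_{n+2}) ≤ 1/2`; in particular,
no ε-feasible follower's decision yields an objective value larger than `1/2`. -/
theorem stmt9 (n : ℕ) (hn : 2 ≤ n)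
    (xl1 xl2 xu1 xu2 : ℝ) (hl1 : 1 ≤ xl1) (hl2 : 1 ≤ xl2)
    (hu1 : xl1 < xu1) (hu2 : xl2 < xu2)
    (x1 x2 : ℝ) (hx1 : x1 ∈ Set.Icc xl1 xu1) (hx2 : x2 ∈ Set.Icc xl2 xu2)
    (ε : ℝ) (hε : 0 < ε) (y : Fin (n + 2) → ℝ) (hy : y ∈ OmegaEps n x1 x2 ε) :
    follower n x1 x2 y =
      1 / 2 - y ⟨n - 1, by omega⟩ *
        (1 + x1 + x2 - y ⟨n, by omega⟩ - y ⟨n + 1, by omega⟩) ∧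
    follower n x1 x2 y ≤ 1 / 2 := by
  obtain ⟨hsum, -, hnonneg, -, h1, -, h2⟩ := hy
  have hyn := hnonneg n (by omega) le_rfl
  -- Substituting `y₁ = 1/2 - yₙ` gives the closed form of the objective.
  have heq : follower n x1 x2 y =
      1 / 2 - y ⟨n - 1, by omega⟩ *
        (1 + x1 + x2 - y ⟨n, by omega⟩ - y ⟨n + 1, by omega⟩) := by
    unfold follower
    linear_combination hsum
  refine ⟨heq, ?_⟩
  -- The bounds `y_{n+1} ≤ x₁` and `y_{n+2} ≤ x₂` make the second factor at least `1`.
  have hprod := mul_nonneg hyn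
    (show 0 ≤ 1 + x1 + x2 - y ⟨n, by omega⟩ - y ⟨n + 1, by omega⟩ by linarith)
  rw [heq]
  linarith
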